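/- arXiv:2507.23240 — 6 statements merged into one kernel-verified Lean document; each statement's English description precedes it below -/
import Mathlib

section
/- Suppose m = p ≥ 2, X is an m×m invertible real matrix, and ν_1,…,ν_m > 0. Let c_i be the i-th diagonal entry of (XXᵀ)⁻¹ (each c_i > 0). Then an allocation w* = (w_1*,…,w_m*) ∈ S_m satisfies h(w*) = max_{w ∈ S_m} h(w) if and only if w_i* = √(c_i/ν_i) / Σ_{j=1}^m √(c_j/ν_j) for every i = 1,…,m. -/
/-!
For invertible `X` one has `(XᵀWX)⁻¹ = X⁻¹ W⁻¹ (Xᵀ)⁻¹`, so by cyclicity of the trace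
`tr (XᵀWX)⁻¹ = ∑ i, c i / (w i * ν i)` with `c i` the diagonal entries of `(X Xᵀ)⁻¹`, while
`f(w) = (det X)² ∏ w i ν i` is positive exactly when every `w i` is. Writing `a i = √(c i / ν i)`
and `A = ∑ i, a i`, this gives `h(w) = (∑ i, a i ² / w i)⁻¹` in the interior of the simplex and
`h(w) = 0` on its boundary. The identity
`∑ i, a i ² / w i = A² + ∑ i, (a i - A w i)² / w i` (for `∑ i, w i = 1`) then shows `h ≤ (A²)⁻¹`,
with equality exactly at `w i = a i / A`.
-/

open Matrix

noncomputable def infoM {m p : ℕ} (X : Matrix (Fin m) (Fin p) ℝ) (ν w : Fin m → ℝ) :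
    Matrix (Fin p) (Fin p) ℝ :=
  Xᵀ * Matrix.diagonal (fun i => w i * ν i) * X

noncomputable def fFun {m p : ℕ} (X : Matrix (Fin m) (Fin p) ℝ) (ν w : Fin m → ℝ) : ℝ :=
  (infoM X ν w).det

noncomputable def hFun {m p : ℕ} (X : Matrix (Fin m) (Fin p) ℝ) (ν w : Fin m → ℝ) : ℝ :=
  if 0 < fFun X ν w then ((infoM X ν w)⁻¹).trace⁻¹ else 0

theorem fFun_eq {m : ℕ} (X : Matrix (Fin m) (Fin m) ℝ) (ν w : Fin m → ℝ) :
    fFun X ν w = X.det ^ 2 * ∏ i, w i * ν i := by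
  simp only [fFun, infoM, Matrix.det_mul, Matrix.det_transpose, Matrix.det_diagonal]
  ring

theorem fFun_pos_iff {m : ℕ} {X : Matrix (Fin m) (Fin m) ℝ} (hX : IsUnit X)
    {ν : Fin m → ℝ} (hν : ∀ i, 0 < ν i) {w : Fin m → ℝ} (hw0 : ∀ i, 0 ≤ w i) :
    0 < fFun X ν w ↔ ∀ i, 0 < w i := by
  have hd : X.det ≠ 0 := ((Matrix.isUnit_iff_isUnit_det X).1 hX).ne_zero
  rw [fFun_eq]
  constructor
  · intro h i
    refine lt_of_le_of_ne (hw0 i) fun h0 => h.ne' ?_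
    rw [Finset.prod_eq_zero (Finset.mem_univ i) (by rw [← h0, zero_mul]), mul_zero]
  · intro h
    exact mul_pos (by positivity) (Finset.prod_pos fun i _ => mul_pos (h i) (hν i))

theorem trace_infoM_inv {m : ℕ} {X : Matrix (Fin m) (Fin m) ℝ}
    {ν : Fin m → ℝ} (hν : ∀ i, 0 < ν i) {w : Fin m → ℝ} (hw : ∀ i, 0 < w i) :
    ((infoM X ν w)⁻¹).trace = ∑ i, ((X * Xᵀ)⁻¹ i i / ν i) / w i := by
  have hD : (Matrix.diagonal (fun i => w i * ν i))⁻¹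
      = Matrix.diagonal (fun i => (w i * ν i)⁻¹) := by
    apply Matrix.inv_eq_right_inv
    rw [Matrix.diagonal_mul_diagonal, ← Matrix.diagonal_one]
    congr 1
    funext i
    exact mul_inv_cancel₀ (mul_pos (hw i) (hν i)).ne'
  rw [infoM, Matrix.mul_inv_rev, Matrix.mul_inv_rev, hD, Matrix.trace_mul_comm, Matrix.mul_assoc,
    ← Matrix.mul_inv_rev, Matrix.trace]
  refine Finset.sum_congr rfl fun i _ => ?_
  rw [Matrix.diag_apply, Matrix.diagonal_mul, mul_inv, div_eq_mul_inv, div_eq_mul_inv]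
  ring

/-- The sum-of-squares form of the Cauchy–Schwarz bound `(∑ a)² ≤ ∑ a² / v` on the simplex. -/
theorem sum_sq_div_eq {m : ℕ} (a v : Fin m → ℝ) (hv : ∀ i, 0 < v i) (hv1 : ∑ i, v i = 1) :
    ∑ i, a i ^ 2 / v i
      = (∑ i, a i) ^ 2 + ∑ i, (a i - (∑ j, a j) * v i) ^ 2 / v i := by
  have h : ∀ A : ℝ, ∀ i, (a i - A * v i) ^ 2 / v i
      = a i ^ 2 / v i - 2 * A * a i + A ^ 2 * v i := by
    intro A i
    have := (hv i).ne'
    field_simp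
    ring
  simp only [h, Finset.sum_add_distrib, Finset.sum_sub_distrib, ← Finset.mul_sum, hv1]
  ring

theorem stmt1 {m : ℕ} (hm : 2 ≤ m) (X : Matrix (Fin m) (Fin m) ℝ) (hX : IsUnit X)
    (ν : Fin m → ℝ) (hν : ∀ i, 0 < ν i)
    (hc : ∀ i, 0 < (X * Xᵀ)⁻¹ i i)
    (w : Fin m → ℝ) (hw0 : ∀ i, 0 ≤ w i) (hw1 : ∑ i, w i = 1) :
    (∀ v : Fin m → ℝ, (∀ i, 0 ≤ v i) → ∑ i, v i = 1 → hFun X ν v ≤ hFun X ν w)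
      ↔ ∀ i, w i = Real.sqrt ((X * Xᵀ)⁻¹ i i / ν i)
          / ∑ j, Real.sqrt ((X * Xᵀ)⁻¹ j j / ν j) := by
  obtain ⟨a, ha⟩ : ∃ a : Fin m → ℝ, a = fun i => Real.sqrt ((X * Xᵀ)⁻¹ i i / ν i) := ⟨_, rfl⟩
  have hapos : ∀ i, 0 < a i := fun i => by
    rw [ha]
    exact Real.sqrt_pos.2 (div_pos (hc i) (hν i))
  have hasq : ∀ i, (X * Xᵀ)⁻¹ i i / ν i = a i ^ 2 := fun i => by
    rw [ha]
    exact (Real.sq_sqrt (div_pos (hc i) (hν i)).le).symm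
  have hgoal : ∀ i, Real.sqrt ((X * Xᵀ)⁻¹ i i / ν i) = a i := fun i => by rw [ha]
  simp only [hgoal]
  obtain ⟨A, hA⟩ : ∃ A, A = ∑ j, a j := ⟨_, rfl⟩
  have hApos : 0 < A := by
    rw [hA]
    exact Finset.sum_pos (fun i _ => hapos i) ⟨⟨0, by omega⟩, Finset.mem_univ _⟩
  have hval : ∀ v : Fin m → ℝ, (∀ i, 0 < v i) → ∑ i, v i = 1 →
      hFun X ν v = (A ^ 2 + ∑ i, (a i - A * v i) ^ 2 / v i)⁻¹ := by
    intro v hv hv1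
    rw [hFun, if_pos ((fFun_pos_iff hX hν fun i => (hv i).le).2 hv), trace_infoM_inv hν hv]
    simp only [hasq]
    rw [sum_sq_div_eq a v hv hv1, ← hA]
  have hbound : ∀ v : Fin m → ℝ, (∀ i, 0 ≤ v i) → ∑ i, v i = 1 → hFun X ν v ≤ (A ^ 2)⁻¹ := by
    intro v hv hv1
    by_cases h : ∀ i, 0 < v i
    · rw [hval v h hv1]
      apply inv_anti₀ (by positivity)
      have : 0 ≤ ∑ i, (a i - A * v i) ^ 2 / v i :=
        Finset.sum_nonneg fun i _ => div_nonneg (sq_nonneg _) (hv i)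
      linarith
    · rw [hFun, if_neg (mt (fFun_pos_iff hX hν hv).1 h)]
      positivity
  have hopt_pos : ∀ i, 0 < a i / A := fun i => div_pos (hapos i) hApos
  have hopt_sum : ∑ i, a i / A = 1 := by
    rw [← Finset.sum_div, ← hA, div_self hApos.ne']
  have hopt : hFun X ν (fun i => a i / A) = (A ^ 2)⁻¹ := by
    rw [hval _ hopt_pos hopt_sum]
    simp [mul_div_cancel₀ _ hApos.ne']
  rw [← hA]
  constructor
  · intro hmax i
    have hle := hmax _ (fun i => (hopt_pos i).le) hopt_sum
    rw [hopt] at hle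
    have hApos2 : 0 < (A ^ 2)⁻¹ := by positivity
    -- A maximizer has positive value, hence lies in the interior of the simplex.
    have hw : ∀ i, 0 < w i := by
      rw [← fFun_pos_iff hX hν hw0]
      by_contra hn
      rw [hFun, if_neg hn] at hle
      exact absurd hle (not_le.2 hApos2)
    have heq := le_antisymm (hbound w hw0 hw1) hle
    rw [hval w hw hw1] at heq
    have hzero : ∑ i, (a i - A * w i) ^ 2 / w i = 0 := by
      have := inv_injective heq
      linarith
    rw [Finset.sum_eq_zero_iff_of_nonneg fun i _ => div_nonneg (sq_nonneg _) (hw0 i)] at hzero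
    have hi := hzero i (Finset.mem_univ i)
    rw [div_eq_zero_iff, or_iff_left (hw i).ne', sq_eq_zero_iff, sub_eq_zero] at hi
    rw [eq_div_iff hApos.ne', hi, mul_comm]
  · intro h v hv hv1
    rw [show w = fun i => a i / A from funext h, hopt]
    exact hbound v hv hv1
end

section
/- Let m ≥ p ≥ 2, X a real m×p matrix, ν_i > 0, w ∈ S_m, and fix an index i with 0 ≤ w_i < 1. Then for each j = 1,…,p there exist constants a_j ≥ 0 and b_j ≥ 0 such that f_i^{(−j)}(x) = a_j x(1−x)^{p−2} + b_j (1−x)^{p−1} for all x ∈ [0,1]; these constants satisfy b_j = f_i^{(−j)}(0) and a_j = 2^{p−1} f_i^{(−j)}(1/2) − b_j. Moreover, if f(w) > 0 then f_i^{(−j)}(x) > 0 for all x ∈ (0,1), and hence a_j + b_j > 0. -/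
/-!
Put `Y = X_{-j}`, let `y` be its `i`-th row and `G` its information matrix at the allocation
`w(0)`. The information matrix at `w(x)` is `(1 - x) G + x ν_i y yᵀ`, a rank-one perturbation of a
multiple of `G`, so its determinant is affine in the coefficient of `y yᵀ`
(`det_add_smul_vecMulVec`). Homogeneity then gives
`(1 - x)^(p-1) det G + x (1 - x)^(p-2) a` (`det_smul_add_smul_vecMulVec`), so `b = det G ≥ 0`, and
`a ≥ 0` because the affine function `t ↦ det G + t a = det (G + t ν_i y yᵀ)` is nonnegative on
`[0, ∞)`.

If `f(w) > 0`, the quadratic form `Σ_l w_l ν_l (X v)_l²` is positive definite. Every positive `w_l`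
stays positive in `w(x)` for `0 < x < 1`, so the form at `w(x)` is positive definite too, and
`f_{-j}(w(x))` is one of its principal minors.
-/

open Matrix

def dropIdx {p : ℕ} (j : Fin p) (k : Fin (p - 1)) : Fin p :=
  if h : (k : ℕ) < (j : ℕ) then ⟨k, lt_trans h j.isLt⟩
  else ⟨(k : ℕ) + 1, by have hk := k.isLt; omega⟩

noncomputable def fminus {m p : ℕ} (X : Matrix (Fin m) (Fin p) ℝ) (ν : Fin m → ℝ)
    (j : Fin p) (w : Fin m → ℝ) : ℝ :=
  ((X.submatrix id (dropIdx j))ᵀ * Matrix.diagonal (fun i => w i * ν i)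
    * X.submatrix id (dropIdx j)).det

noncomputable def liftW {m : ℕ} (w : Fin m → ℝ) (i : Fin m) (x : ℝ) : Fin m → ℝ :=
  fun l => if l = i then x else w l * (1 - x) / (1 - w i)

/-- The determinant of a rank-one perturbation is affine in its coefficient, also for singular `G`:
it equals the bordered determinant `det [[G, u], [-t v, 1]]`, which is affine in the last row. -/
lemma det_add_smul_vecMulVec {n : Type*} [Fintype n] [DecidableEq n] (G : Matrix n n ℝ)
    (u v : n → ℝ) :
    ∃ a : ℝ, ∀ t : ℝ, (G + t • vecMulVec u v).det = G.det + t * a := by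
  let B : Matrix (n ⊕ Unit) (n ⊕ Unit) ℝ := fromBlocks G (replicateCol Unit u) 0 0
  have key : ∀ t : ℝ, (G + t • vecMulVec u v).det
      = (B.updateRow (Sum.inr ())
        (t • Sum.elim (-v) (0 : Unit → ℝ) + Sum.elim (0 : n → ℝ) 1)).det := by
    intro t
    have h : B.updateRow (Sum.inr ())
        (t • Sum.elim (-v) (0 : Unit → ℝ) + Sum.elim (0 : n → ℝ) 1)
        = fromBlocks G (replicateCol Unit u) (replicateRow Unit (-(t • v))) 1 := by
      ext (a | a) (b | b) <;> simp [B, updateRow_apply]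
    rw [h, det_fromBlocks_one₂₂]
    congr 1
    ext a b
    simp [vecMulVec_apply, Matrix.mul_apply]
    ring
  refine ⟨(B.updateRow (Sum.inr ()) (Sum.elim (-v) 0)).det, fun t => ?_⟩
  have h0 := key 0
  simp only [zero_smul, add_zero, zero_add] at h0
  rw [key t, det_updateRow_add, det_updateRow_smul, ← h0]
  ring

lemma det_smul_add_smul_vecMulVec {n : Type*} [Fintype n] [DecidableEq n] {q : ℕ}
    (hq : Fintype.card n = q + 1) (G : Matrix n n ℝ) (u v : n → ℝ) :
    ∃ a : ℝ, ∀ s t : ℝ,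
      (s • G + t • vecMulVec u v).det = s ^ (q + 1) * G.det + t * s ^ q * a := by
  obtain ⟨a, ha⟩ := det_add_smul_vecMulVec G u v
  refine ⟨a, fun s t => ?_⟩
  -- For `s ≠ 0` the factor `s` is pulled out; `s = 0` follows by continuity.
  have hc : (fun s : ℝ => (s • G + t • vecMulVec u v).det)
      = fun s : ℝ => s ^ (q + 1) * G.det + t * s ^ q * a := by
    refine Continuous.ext_on (dense_compl_singleton (0 : ℝ)) ?_ (by fun_prop) ?_
    · exact Continuous.matrix_det (by fun_prop)
    · intro s hs
      have hs : s ≠ 0 := hs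
      have h : s • G + t • vecMulVec u v = s • (G + (t / s) • vecMulVec u v) := by
        rw [smul_add, smul_smul, mul_div_cancel₀ _ hs]
      simp only
      rw [h, det_smul, ha, hq, pow_succ]
      field_simp
  exact congrFun hc s

lemma posSemidef_gram {m : ℕ} {n : Type*} [Fintype n] (Y : Matrix (Fin m) n ℝ)
    (d : Fin m → ℝ) (hd : ∀ l, 0 ≤ d l) : (Yᵀ * diagonal d * Y).PosSemidef := by
  have h := (PosSemidef.diagonal (n := Fin m) (d := d) hd).conjTranspose_mul_mul_same Y
  rwa [conjTranspose_eq_transpose_of_trivial] at h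

lemma dotProduct_gram_mulVec {m : ℕ} {n : Type*} [Fintype n] (Y : Matrix (Fin m) n ℝ)
    (d : Fin m → ℝ) (v : n → ℝ) :
    v ⬝ᵥ ((Yᵀ * diagonal d * Y) *ᵥ v) = ∑ l, d l * (Y *ᵥ v) l ^ 2 := by
  rw [← mulVec_mulVec, ← mulVec_mulVec, dotProduct_mulVec, vecMul_transpose, dotProduct]
  refine Finset.sum_congr rfl fun l _ => ?_
  rw [mulVec_diagonal]
  ring

/-- Definiteness of `Yᵀ diag(d) Y` depends only on which of the nonnegative weights vanish. -/
lemma posDef_gram_of_support {m : ℕ} {n : Type*} [Fintype n] (Y : Matrix (Fin m) n ℝ)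
    (d e : Fin m → ℝ) (hd : ∀ l, 0 ≤ d l) (he : ∀ l, 0 ≤ e l) (hde : ∀ l, 0 < d l → 0 < e l)
    (h : (Yᵀ * diagonal d * Y).PosDef) : (Yᵀ * diagonal e * Y).PosDef := by
  refine PosDef.of_dotProduct_mulVec_pos (posSemidef_gram Y e he).1 fun {v} hv => ?_
  have h1 := h.dotProduct_mulVec_pos hv
  rw [star_trivial, dotProduct_gram_mulVec] at h1 ⊢
  obtain ⟨l, -, hl⟩ := Finset.exists_lt_of_sum_lt
    (s := Finset.univ) (f := fun _ : Fin m => (0 : ℝ)) (by simpa using h1)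
  have hdl : 0 < d l := (hd l).lt_of_ne fun h0 => by simp [← h0] at hl
  have hsq : 0 < (Y *ᵥ v) l ^ 2 := pos_of_mul_pos_right hl hdl.le
  exact Finset.sum_pos' (fun k _ => mul_nonneg (he k) (sq_nonneg _))
    ⟨l, Finset.mem_univ _, mul_pos (hde l hdl) hsq⟩

lemma dropIdx_injective {p : ℕ} (j : Fin p) : Function.Injective (dropIdx j) := by
  intro a b h
  unfold dropIdx at h
  ext
  split_ifs at h <;> simp only [Fin.mk.injEq] at h <;> omega

lemma fminus_eq_submatrix {m p : ℕ} (X : Matrix (Fin m) (Fin p) ℝ) (ν : Fin m → ℝ)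
    (j : Fin p) (w : Fin m → ℝ) :
    fminus X ν j w = ((infoM X ν w).submatrix (dropIdx j) (dropIdx j)).det := by
  unfold fminus infoM
  congr 1

lemma weightedGram_apply {m : ℕ} {n : Type*} [Fintype n] (Y : Matrix (Fin m) n ℝ) (d : Fin m → ℝ)
    (a b : n) : (Yᵀ * diagonal d * Y) a b = ∑ l, Y l a * d l * Y l b := by
  rw [Matrix.mul_apply]
  simp only [mul_diagonal, transpose_apply]

/-- The information matrix at `w(x)` as a rank-one perturbation of the one at `w(0)`. -/
lemma gram_liftW {m : ℕ} {n : Type*} [Fintype n] (Y : Matrix (Fin m) n ℝ) (ν w : Fin m → ℝ)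
    (i : Fin m) (x : ℝ) :
    Yᵀ * diagonal (fun l => liftW w i x l * ν l) * Y
      = (1 - x) • (Yᵀ * diagonal (fun l => liftW w i 0 l * ν l) * Y)
        + x • vecMulVec (ν i • Y i) (Y i) := by
  ext a b
  have hx : x * (ν i * Y i a * Y i b)
      = ∑ l, if l = i then x * (ν l * Y l a * Y l b) else 0 := by simp
  simp only [Matrix.add_apply, Matrix.smul_apply, vecMulVec_apply, Pi.smul_apply, smul_eq_mul,
    weightedGram_apply]
  rw [hx, Finset.mul_sum, ← Finset.sum_add_distrib]
  refine Finset.sum_congr rfl fun l _ => ?_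
  by_cases hl : l = i <;> simp [liftW, hl] <;> ring

lemma liftW_nonneg {m : ℕ} {w : Fin m → ℝ} (hw0 : ∀ l, 0 ≤ w l) {i : Fin m} (hwi : w i < 1)
    {x : ℝ} (hx0 : 0 ≤ x) (hx1 : x ≤ 1) (l : Fin m) : 0 ≤ liftW w i x l := by
  unfold liftW
  split_ifs
  · exact hx0
  · exact div_nonneg (mul_nonneg (hw0 l) (by linarith)) (by linarith)

lemma fminus_liftW_pos {m p : ℕ} (X : Matrix (Fin m) (Fin p) ℝ) (ν : Fin m → ℝ)
    (hν : ∀ l, 0 < ν l) (w : Fin m → ℝ) (hw0 : ∀ l, 0 ≤ w l) (i : Fin m) (hwi : w i < 1)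
    (j : Fin p) (hf : 0 < fFun X ν w) {x : ℝ} (hx : x ∈ Set.Ioo (0 : ℝ) 1) :
    0 < fminus X ν j (liftW w i x) := by
  have hd : ∀ l, 0 ≤ w l * ν l := fun l => mul_nonneg (hw0 l) (hν l).le
  have hpd : (infoM X ν w).PosDef :=
    (posSemidef_gram X _ hd).posDef_iff_det_ne_zero.2 hf.ne'
  have hpd' : (infoM X ν (liftW w i x)).PosDef := by
    refine posDef_gram_of_support X _ _ hd
      (fun l => mul_nonneg (liftW_nonneg hw0 hwi hx.1.le hx.2.le l) (hν l).le) (fun l hl => ?_) hpd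
    have hwl : 0 < w l := pos_of_mul_pos_left hl (hν l).le
    refine mul_pos ?_ (hν l)
    unfold liftW
    split_ifs
    · exact hx.1
    · exact div_pos (mul_pos hwl (by linarith [hx.2])) (by linarith)
  rw [fminus_eq_submatrix]
  exact (hpd'.submatrix (dropIdx_injective j)).det_pos

theorem stmt7 {m p : ℕ} (hp : 2 ≤ p) (hmp : p ≤ m)
    (X : Matrix (Fin m) (Fin p) ℝ) (ν : Fin m → ℝ) (hν : ∀ l, 0 < ν l)
    (w : Fin m → ℝ) (hw0 : ∀ l, 0 ≤ w l) (hw1 : ∑ l, w l = 1)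
    (i : Fin m) (hwi : w i < 1) :
    ∀ j : Fin p, ∃ a b : ℝ, 0 ≤ a ∧ 0 ≤ b ∧
      (∀ x ∈ Set.Icc (0 : ℝ) 1,
        fminus X ν j (liftW w i x) = a * x * (1 - x) ^ (p - 2) + b * (1 - x) ^ (p - 1)) ∧
      b = fminus X ν j (liftW w i 0) ∧
      a = 2 ^ (p - 1) * fminus X ν j (liftW w i (1 / 2)) - b ∧
      (0 < fFun X ν w →
        (∀ x ∈ Set.Ioo (0 : ℝ) 1, 0 < fminus X ν j (liftW w i x)) ∧ 0 < a + b) := by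
  intro j
  obtain ⟨q, rfl⟩ : ∃ q, p = q + 2 := ⟨p - 2, by omega⟩
  let Y := X.submatrix id (dropIdx j)
  let G := Yᵀ * diagonal (fun l => liftW w i 0 l * ν l) * Y
  have hG : G.PosSemidef := posSemidef_gram Y _ fun l =>
    mul_nonneg (liftW_nonneg hw0 hwi le_rfl zero_le_one l) (hν l).le
  obtain ⟨a, ha⟩ := det_smul_add_smul_vecMulVec (q := q) (Fintype.card_fin _) G (ν i • Y i) (Y i)
  have hform : ∀ x : ℝ, fminus X ν j (liftW w i x)
      = a * x * (1 - x) ^ q + G.det * (1 - x) ^ (q + 1) := by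
    intro x
    have h : fminus X ν j (liftW w i x)
        = ((1 - x) • G + x • vecMulVec (ν i • Y i) (Y i)).det :=
      congrArg det (gram_liftW Y ν w i x)
    rw [h, ha]
    ring
  have hb : 0 ≤ G.det := hG.det_nonneg
  have hline : ∀ t : ℝ, 0 ≤ t → 0 ≤ G.det + t * a := by
    intro t ht
    have hu : (vecMulVec (ν i • Y i) (Y i)).PosSemidef := by
      have h := (posSemidef_vecMulVec_self_star (Y i)).smul (hν i).le
      rwa [star_trivial, ← smul_vecMulVec] at h
    have h := (hG.add (hu.smul ht)).det_nonneg
    have h1 := ha 1 t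
    simp only [one_smul, one_pow, one_mul, mul_one] at h1
    rwa [h1] at h
  have ha0 : 0 ≤ a := by
    by_contra hneg
    have hneg : a < 0 := not_le.1 hneg
    -- At this point beyond its zero the decreasing affine function takes the value `-1`.
    have h := hline ((G.det + 1) / (-a)) (div_nonneg (by linarith) (by linarith))
    have h2 : (G.det + 1) / (-a) * a = -(G.det + 1) := by
      rw [div_neg, neg_mul, div_mul_cancel₀ _ hneg.ne]
    linarith
  have hhalf : a = 2 ^ (q + 1) * fminus X ν j (liftW w i (1 / 2)) - G.det := by
    have h2 : (2 : ℝ) ^ q * (1 / 2) ^ q = 1 := by rw [← mul_pow]; norm_num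
    rw [hform, show (1 : ℝ) - 1 / 2 = 1 / 2 by norm_num, pow_succ, pow_succ]
    linear_combination (-(a + G.det)) * h2
  refine ⟨a, G.det, ha0, hb, fun x _ => hform x, rfl, hhalf, fun hf => ?_⟩
  have hpos := fun x hx => fminus_liftW_pos X ν hν w hw0 i hwi j hf (x := x) hx
  refine ⟨hpos, ?_⟩
  have h := mul_pos (pow_pos (two_pos : (0 : ℝ) < 2) (q + 1))
    (hpos (1 / 2) ⟨by norm_num, by norm_num⟩)
  linarith
end

section
/- Let m > p ≥ 2, X a real m×p matrix, ν_i > 0, and w ∈ S_m with 0 ≤ w_l < 1 for every l and f(w) > 0; fix an index i. With a, A defined as in the context, if A = 0 then a = 0. -/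
/-!
Let `x` be the `i`-th row of `X`, `N` the information matrix at `liftW w i 0`, and
`M = N + ν i • x xᵀ`, which is twice the information matrix at `liftW w i (1 / 2)`. Then
`a = det M - det N`, and `a_j` is the same difference for the principal submatrices `M₋ⱼ`, `N₋ⱼ`
obtained by deleting the `j`-th row and column.

By the matrix determinant lemma a nonnegative rank-one update of a positive semidefinite matrix
does not decrease the determinant (`det_le_det_add_rankOne`), so `a_j ≥ 0`, and `A = 0` forces every
`a_j = 0`. Since `f(w) > 0`, the matrix `M` is positive definite, hence so is every `M₋ⱼ`, and
`det N₋ⱼ = det M₋ⱼ > 0`. For a positive definite matrix the determinant increases strictly unless the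
update vector vanishes (`eq_zero_of_det_add_rankOne_eq`); therefore `x` with its `j`-th entry removed
is zero for every `j`. As `p ≥ 2`, this gives `x = 0`, so `M = N` and `a = 0`.
-/

open Matrix

/-- The matrix determinant lemma for a scaled symmetric rank-one update. -/
lemma det_add_rankOne {n : ℕ} (N : Matrix (Fin n) (Fin n) ℝ) (hN : N.det ≠ 0) (c : ℝ)
    (u : Fin n → ℝ) :
    (N + c • vecMulVec u u).det = N.det * (1 + c * (u ⬝ᵥ N⁻¹ *ᵥ u)) := by
  have h := det_add_replicateCol_mul_replicateRow (ι := Unit) (isUnit_iff_ne_zero.mpr hN) (c • u) u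
  rw [← vecMulVec_eq, smul_vecMulVec] at h
  rw [h]
  congr 1
  rw [det_unique, Matrix.add_apply, one_apply_eq, Matrix.mul_assoc, ← replicateCol_mulVec]
  rw [replicateRow_mul_replicateCol_apply, mulVec_smul, dotProduct_smul, smul_eq_mul]

lemma det_le_det_add_rankOne {n : ℕ} {N : Matrix (Fin n) (Fin n) ℝ} (hN : N.PosSemidef) {c : ℝ}
    (hc : 0 ≤ c) (u : Fin n → ℝ) : N.det ≤ (N + c • vecMulVec u u).det := by
  by_cases h : N.det = 0
  · rw [h]
    have hu : (vecMulVec u u).PosSemidef := by simpa using posSemidef_vecMulVec_self_star u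
    exact (hN.add (hu.smul hc)).det_nonneg
  · rw [det_add_rankOne N h]
    have h1 := hN.inv.dotProduct_mulVec_nonneg u
    rw [star_trivial] at h1
    nlinarith [mul_nonneg hN.det_nonneg (mul_nonneg hc h1)]

lemma eq_zero_of_det_add_rankOne_eq {n : ℕ} {N : Matrix (Fin n) (Fin n) ℝ} (hN : N.PosDef) {c : ℝ}
    (hc : 0 < c) {u : Fin n → ℝ} (h : (N + c • vecMulVec u u).det = N.det) : u = 0 := by
  by_contra hu
  rw [det_add_rankOne N hN.det_pos.ne'] at h
  have h1 := hN.inv.dotProduct_mulVec_pos hu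
  rw [star_trivial] at h1
  nlinarith [mul_pos hN.det_pos (mul_pos hc h1)]

lemma exists_dropIdx_eq {p : ℕ} {j k : Fin p} (h : k ≠ j) : ∃ l, dropIdx j l = k := by
  have hk := k.isLt
  have hj := j.isLt
  have h' : (k : ℕ) ≠ j := fun e => h (Fin.ext e)
  rcases lt_or_gt_of_ne h' with h1 | h1
  · refine ⟨⟨k, by omega⟩, ?_⟩
    simp [dropIdx, h1]
  · refine ⟨⟨k - 1, by omega⟩, ?_⟩
    have : ¬ ((k : ℕ) - 1 < j) := by omega
    ext
    simp only [dropIdx, this, dite_false]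
    omega

lemma infoM_apply {m p : ℕ} (X : Matrix (Fin m) (Fin p) ℝ) (ν w : Fin m → ℝ) (r s : Fin p) :
    infoM X ν w r s = ∑ l, w l * ν l * X l r * X l s := by
  rw [infoM, mul_apply]
  simp only [mul_diagonal, transpose_apply]
  exact Finset.sum_congr rfl fun l _ => by ring

lemma infoM_posSemidef {m p : ℕ} (X : Matrix (Fin m) (Fin p) ℝ) {ν w : Fin m → ℝ}
    (hν : ∀ l, 0 < ν l) (hw : ∀ l, 0 ≤ w l) : (infoM X ν w).PosSemidef := by
  have h : (diagonal fun l => w l * ν l).PosSemidef :=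
    PosSemidef.diagonal fun l => mul_nonneg (hw l) (hν l).le
  simpa [infoM] using h.conjTranspose_mul_mul_same X

/-- The information matrix as an affine combination of the one with all weight moved off `i` and
the rank-one contribution of row `i`; it applies to `v = liftW w i x` and, when `w i ≠ 1`,
to `v = w` with `x = w i`. -/
lemma infoM_eq_add_rankOne {m p : ℕ} (X : Matrix (Fin m) (Fin p) ℝ) (ν w : Fin m → ℝ) (i : Fin m)
    (x : ℝ) (v : Fin m → ℝ) (hvi : v i = x)
    (hv : ∀ l, l ≠ i → v l = (1 - x) * liftW w i 0 l) :
    infoM X ν v = (1 - x) • infoM X ν (liftW w i 0) + (x * ν i) • vecMulVec (X i) (X i) := by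
  ext r s
  rw [Matrix.add_apply, Matrix.smul_apply, Matrix.smul_apply, infoM_apply, infoM_apply, vecMulVec_apply, smul_eq_mul,
    smul_eq_mul, Finset.mul_sum, ← Finset.add_sum_erase _ _ (Finset.mem_univ i),
    ← Finset.add_sum_erase (Finset.univ) (fun l => (1 - x) * _) (Finset.mem_univ i), hvi]
  have h0 : liftW w i 0 i = 0 := by simp [liftW]
  have h1 : ∑ l ∈ Finset.univ.erase i, v l * ν l * X l r * X l s =
      ∑ l ∈ Finset.univ.erase i, (1 - x) * (liftW w i 0 l * ν l * X l r * X l s) :=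
    Finset.sum_congr rfl fun l hl => by rw [hv l (Finset.ne_of_mem_erase hl)]; ring
  rw [h0, h1]
  ring

lemma fminus_eq_det_submatrix {m p : ℕ} (X : Matrix (Fin m) (Fin p) ℝ) (ν w : Fin m → ℝ)
    (j : Fin p) :
    fminus X ν j w = ((infoM X ν w).submatrix (dropIdx j) (dropIdx j)).det := by
  unfold fminus
  congr 1

theorem stmt8 {m p : ℕ} (hp : 2 ≤ p) (hmp : p < m)
    (X : Matrix (Fin m) (Fin p) ℝ) (ν : Fin m → ℝ) (hν : ∀ l, 0 < ν l)
    (w : Fin m → ℝ) (hw0 : ∀ l, 0 ≤ w l) (hw1 : ∑ l, w l = 1)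
    (hwlt : ∀ l, w l < 1) (hf : 0 < fFun X ν w) (i : Fin m)
    (a b A : ℝ)
    (hb : b = fFun X ν (liftW w i 0))
    (ha : a = 2 ^ p * fFun X ν (liftW w i (1 / 2)) - b)
    (hA : A = ∑ j, (2 ^ (p - 1) * fminus X ν j (liftW w i (1 / 2))
        - fminus X ν j (liftW w i 0))) :
    A = 0 → a = 0 := by
  intro hA0
  have hwi : 0 < 1 - w i := sub_pos.mpr (hwlt i)
  set N := infoM X ν (liftW w i 0) with hNdef
  have hN : N.PosSemidef := infoM_posSemidef X hν fun l => by
    unfold liftW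
    split_ifs
    · exact le_rfl
    · have := hw0 l
      rw [sub_zero, mul_one]
      positivity
  have hR : (vecMulVec (X i) (X i)).PosSemidef := by
    simpa using posSemidef_vecMulVec_self_star (X i)
  set M := N + ν i • vecMulVec (X i) (X i) with hMdef
  have hhalf : infoM X ν (liftW w i (1 / 2)) = (1 / 2 : ℝ) • M := by
    rw [infoM_eq_add_rankOne X ν w i (1 / 2) _ (by simp [liftW])
      (fun l hl => by simp only [liftW, hl, if_false]; ring), hMdef, smul_add, smul_smul]
    norm_num
    rfl
  have hself : infoM X ν w = (1 - w i) • N + (w i * ν i) • vecMulVec (X i) (X i) :=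
    infoM_eq_add_rankOne X ν w i (w i) _ rfl
      (fun l hl => by simp only [liftW, hl, if_false]; field_simp; ring)
  have hMpd : M.PosDef := by
    have h1 : (infoM X ν w).PosDef :=
      (infoM_posSemidef X hν hw0).posDef_iff_det_ne_zero.mpr hf.ne'
    have h2 : (w i • N + ((1 - w i) * ν i) • vecMulVec (X i) (X i)).PosSemidef :=
      (hN.smul (hw0 i)).add (hR.smul (mul_nonneg hwi.le (hν i).le))
    have h3 : M = infoM X ν w + (w i • N + ((1 - w i) * ν i) • vecMulVec (X i) (X i)) := by
      rw [hself, hMdef]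
      module
    rw [h3]
    exact h1.add_posSemidef h2
  have hsub : ∀ j : Fin p, M.submatrix (dropIdx j) (dropIdx j) =
      N.submatrix (dropIdx j) (dropIdx j)
        + ν i • vecMulVec (X i ∘ dropIdx j) (X i ∘ dropIdx j) := fun j => rfl
  have haj : ∀ j : Fin p, 2 ^ (p - 1) * fminus X ν j (liftW w i (1 / 2))
      = (M.submatrix (dropIdx j) (dropIdx j)).det := fun j => by
    rw [fminus_eq_det_submatrix, hhalf, submatrix_smul, Pi.smul_apply, Pi.smul_apply, det_smul,
      Fintype.card_fin, ← mul_assoc, ← mul_pow]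
    norm_num
  have hnn : ∀ j ∈ Finset.univ, 0 ≤ 2 ^ (p - 1) * fminus X ν j (liftW w i (1 / 2))
      - fminus X ν j (liftW w i 0) := fun j _ => by
    rw [haj, fminus_eq_det_submatrix, hsub, sub_nonneg]
    exact det_le_det_add_rankOne (hN.submatrix _) (hν i).le _
  have hzero := (Finset.sum_eq_zero_iff_of_nonneg hnn).mp (hA ▸ hA0)
  have hx : ∀ j : Fin p, X i ∘ dropIdx j = 0 := fun j => by
    have h1 := hzero j (Finset.mem_univ j)
    rw [haj, fminus_eq_det_submatrix, sub_eq_zero] at h1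
    have h2 := (hMpd.submatrix (dropIdx_injective j)).det_pos
    have h3 : (N.submatrix (dropIdx j) (dropIdx j)).PosDef :=
      (hN.submatrix _).posDef_iff_det_ne_zero.mpr (h1 ▸ h2.ne')
    rw [hsub] at h1
    exact eq_zero_of_det_add_rankOne_eq h3 (hν i) h1
  have hx0 : X i = 0 := by
    funext k
    -- Since `p ≥ 2`, coordinate `k` survives the deletion of some other column.
    have : Nontrivial (Fin p) := Fin.nontrivial_iff_two_le.mpr hp
    obtain ⟨j, hj⟩ := exists_ne k
    obtain ⟨l, hl⟩ := exists_dropIdx_eq hj.symm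
    simpa [hl] using congrFun (hx j) l
  have hMN : M = N := by
    rw [hMdef, hx0]
    simp
  rw [ha, hb, fFun, fFun, hhalf, hMN, det_smul, Fintype.card_fin, ← mul_assoc, ← mul_pow]
  norm_num [← hNdef]
end

section
/- Let p ≥ 2, let 𝒳 ⊆ ℝ^d be a nonempty compact set, q : ℝ^d → ℝ^p continuous on 𝒳, β ∈ ℝ^p, and ν : ℝ → ℝ continuous with ν ≥ 0. Suppose there exists a Borel probability measure ξ₀ on 𝒳 with det F(ξ₀) > 0. Then there exists a finitely supported Borel probability measure ξ* on 𝒳 whose support contains at most p(p+1)/2 points such that h(ξ*) ≥ h(ξ) for every Borel probability measure ξ on 𝒳. -/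
/-!
The criterion `h` extends to a function `hMat` of the information matrix, and for a positive
semidefinite matrix `M` of order at least one it has the variational description
`hMat M = min {tr (Aᵀ M A) | tr A = 1}` (`hMat_le`, `exists_hMat_eq`): the minimum is attained at
`A = M⁻¹ / tr M⁻¹` when `M` is invertible, and at `A = v vᵀ / (v ⬝ v)` with `M v = 0` otherwise.
Being a minimum of continuous linear functionals, `hMat` is upper semicontinuous, and it satisfies
`t * hMat M ≤ hMat (t • M)` for `t ≥ 0`.

Symmetric matrices are coordinatised by functions `Sym2 (Fin p) → ℝ`, a space of dimension
`p (p + 1) / 2`. The information matrices of the probability measures on the compact set all lie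
in the convex hull `K` of the compact set of the one-point information matrices; `K` is compact
(`isCompact_convexHull_of_isCompact`), so `hMat` has a maximiser on `K`, with a positive value.

By Carathéodory's theorem the maximiser is a convex combination, with positive weights, of affinely
independent one-point matrices. These are even linearly independent
(`linearIndependent_of_maximal`): a linear relation has nonzero coefficient sum by affine
independence, so shifting the weights along it represents the maximiser with total weight less
than one; rescaling to total weight one gives a point of `K` with a larger value. Hence there are
at most `p (p + 1) / 2` of them, and the weights define the optimal measure.
-/

open Matrix MeasureTheory

noncomputable def Fmat {d p : ℕ} (q : (Fin d → ℝ) → (Fin p → ℝ)) (β : Fin p → ℝ)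
    (ν : ℝ → ℝ) (ξ : Measure (Fin d → ℝ)) : Matrix (Fin p) (Fin p) ℝ :=
  fun i j => ∫ x, ν (β ⬝ᵥ q x) * (q x i * q x j) ∂ξ

noncomputable def hMeas {d p : ℕ} (q : (Fin d → ℝ) → (Fin p → ℝ)) (β : Fin p → ℝ)
    (ν : ℝ → ℝ) (ξ : Measure (Fin d → ℝ)) : ℝ :=
  if 0 < (Fmat q β ν ξ).det then ((Fmat q β ν ξ)⁻¹).trace⁻¹ else 0

/-! ### The criterion as a function of the information matrix -/

/-- The criterion `(tr M⁻¹)⁻¹`, set to zero where `det M ≤ 0`. -/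
noncomputable def hMat {p : ℕ} (M : Matrix (Fin p) (Fin p) ℝ) : ℝ :=
  if 0 < M.det then (M⁻¹).trace⁻¹ else 0

theorem trace_conj_nonneg {p : ℕ} {M : Matrix (Fin p) (Fin p) ℝ} (hM : M.PosSemidef)
    (A : Matrix (Fin p) (Fin p) ℝ) : 0 ≤ (Aᵀ * M * A).trace := by
  have h := (hM.conjTranspose_mul_mul_same A).trace_nonneg
  rwa [conjTranspose_eq_transpose_of_trivial] at h

/-- Expanding `0 ≤ tr (Bᵀ M B)` for `B = A - c M⁻¹` with `c = 1 / tr M⁻¹` gives the bound. -/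
theorem hMat_le {p : ℕ} {M : Matrix (Fin p) (Fin p) ℝ} (hM : M.PosSemidef)
    {A : Matrix (Fin p) (Fin p) ℝ} (hA : A.trace = 1) : hMat M ≤ (Aᵀ * M * A).trace := by
  unfold hMat
  split_ifs with hdet
  · have hu : IsUnit M.det := isUnit_iff_ne_zero.2 hdet.ne'
    have hMt : Mᵀ = M := by
      have := hM.isHermitian
      rwa [IsHermitian, conjTranspose_eq_transpose_of_trivial] at this
    set c := (M⁻¹).trace⁻¹ with hc
    have h := trace_conj_nonneg hM (A - c • M⁻¹)
    have hexp : ((A - c • M⁻¹)ᵀ * M * (A - c • M⁻¹))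
        = Aᵀ * M * A - c • Aᵀ - c • A + (c * c) • M⁻¹ := by
      rw [transpose_sub, transpose_smul, transpose_nonsing_inv, hMt]
      simp only [sub_mul, mul_sub, smul_mul_assoc, mul_smul_comm,
        nonsing_inv_mul M hu, one_mul]
      rw [Matrix.mul_assoc Aᵀ M M⁻¹, mul_nonsing_inv M hu, Matrix.mul_one]
      module
    rw [hexp] at h
    simp only [trace_add, trace_sub, trace_smul, trace_transpose, hA, smul_eq_mul, mul_one] at h
    have hcc : c * c * (M⁻¹).trace ≤ c := by
      by_cases h0 : (M⁻¹).trace = 0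
      · simp [hc, h0]
      · rw [mul_assoc, hc, inv_mul_cancel₀ h0, mul_one]
    linarith
  · exact trace_conj_nonneg hM A

theorem exists_hMat_eq {p : ℕ} (hp : 2 ≤ p) {M : Matrix (Fin p) (Fin p) ℝ} (hM : M.PosSemidef) :
    ∃ A : Matrix (Fin p) (Fin p) ℝ, A.trace = 1 ∧ (Aᵀ * M * A).trace = hMat M := by
  have : Nonempty (Fin p) := ⟨⟨0, by omega⟩⟩
  unfold hMat
  split_ifs with hdet
  · have hu : IsUnit M.det := isUnit_iff_ne_zero.2 hdet.ne'
    have hpd : M.PosDef := hM.posDef_iff_det_ne_zero.2 hdet.ne'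
    have htr : (M⁻¹).trace ≠ 0 := hpd.inv.trace_pos.ne'
    have hMt : Mᵀ = M := by
      have := hM.isHermitian
      rwa [IsHermitian, conjTranspose_eq_transpose_of_trivial] at this
    refine ⟨(M⁻¹).trace⁻¹ • M⁻¹, ?_, ?_⟩
    · rw [trace_smul, smul_eq_mul, inv_mul_cancel₀ htr]
    · rw [transpose_smul, transpose_nonsing_inv, hMt, smul_mul_assoc, nonsing_inv_mul M hu,
        smul_mul_smul_comm, one_mul, trace_smul, smul_eq_mul, mul_assoc, inv_mul_cancel₀ htr,
        mul_one]
  · have h0 : M.det = 0 := le_antisymm (not_lt.1 hdet) hM.det_nonneg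
    obtain ⟨v, hv, hMv⟩ := exists_mulVec_eq_zero_iff.2 h0
    have hvv : v ⬝ᵥ v ≠ 0 := by simpa using hv
    refine ⟨(v ⬝ᵥ v)⁻¹ • vecMulVec v v, ?_, ?_⟩
    · rw [trace_smul, trace_vecMulVec, smul_eq_mul, inv_mul_cancel₀ hvv]
    · rw [Matrix.mul_assoc, mul_smul_comm, mul_vecMulVec, hMv]
      simp

theorem mul_hMat_le {p : ℕ} (hp : 2 ≤ p) {M : Matrix (Fin p) (Fin p) ℝ} (hM : M.PosSemidef)
    {t : ℝ} (ht : 0 ≤ t) : t * hMat M ≤ hMat (t • M) := by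
  obtain ⟨A, hA, hAe⟩ := exists_hMat_eq hp (hM.smul ht)
  rw [← hAe, mul_smul_comm, smul_mul_assoc, trace_smul, smul_eq_mul]
  exact mul_le_mul_of_nonneg_left (hMat_le hM hA) ht

/-! ### Coordinates on symmetric matrices -/

/-- The symmetric matrix with entries `v s(i, j)`, as a linear map. -/
def symMat (p : ℕ) : (Sym2 (Fin p) → ℝ) →ₗ[ℝ] Matrix (Fin p) (Fin p) ℝ where
  toFun v := fun i j => v s(i, j)
  map_add' _ _ := rfl
  map_smul' _ _ := rfl

/-- The coordinates of the one-point information matrix `ν (βᵀ q(x)) q(x) q(x)ᵀ`. -/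
def infoVec {d p : ℕ} (q : (Fin d → ℝ) → (Fin p → ℝ)) (β : Fin p → ℝ) (ν : ℝ → ℝ)
    (x : Fin d → ℝ) : Sym2 (Fin p) → ℝ :=
  Sym2.lift ⟨fun i j => ν (β ⬝ᵥ q x) * (q x i * q x j), fun i j => by ring⟩

theorem infoVec_mk {d p : ℕ} (q : (Fin d → ℝ) → (Fin p → ℝ)) (β : Fin p → ℝ) (ν : ℝ → ℝ)
    (x : Fin d → ℝ) (i j : Fin p) :
    infoVec q β ν x s(i, j) = ν (β ⬝ᵥ q x) * (q x i * q x j) := rfl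

theorem continuousOn_infoVec {d p : ℕ} {X : Set (Fin d → ℝ)} {q : (Fin d → ℝ) → (Fin p → ℝ)}
    (hq : ContinuousOn q X) (β : Fin p → ℝ) {ν : ℝ → ℝ} (hν : Continuous ν) :
    ContinuousOn (infoVec q β ν) X := by
  refine continuousOn_pi.2 fun s => ?_
  induction s with
  | _ i j =>
    simp only [infoVec_mk]
    have hqi : ∀ k, ContinuousOn (fun x => q x k) X := fun k => continuousOn_pi.1 hq k
    have hdot : ContinuousOn (fun x => β ⬝ᵥ q x) X := by
      unfold dotProduct
      exact continuousOn_finsetSum _ fun k _ => continuousOn_const.mul (hqi k)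
    exact (hν.comp_continuousOn hdot).mul ((hqi i).mul (hqi j))

theorem posSemidef_symMat_infoVec {d p : ℕ} (q : (Fin d → ℝ) → (Fin p → ℝ)) (β : Fin p → ℝ)
    {ν : ℝ → ℝ} (hν0 : ∀ t, 0 ≤ ν t) (x : Fin d → ℝ) :
    (symMat p (infoVec q β ν x)).PosSemidef := by
  have h := (posSemidef_vecMulVec_self_star (q x)).smul (hν0 (β ⬝ᵥ q x))
  exact h

theorem posSemidef_symMat_of_mem {d p : ℕ} (q : (Fin d → ℝ) → (Fin p → ℝ)) (β : Fin p → ℝ)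
    {ν : ℝ → ℝ} (hν0 : ∀ t, 0 ≤ ν t) (X : Set (Fin d → ℝ)) {v : Sym2 (Fin p) → ℝ}
    (hv : v ∈ convexHull ℝ (infoVec q β ν '' X)) : (symMat p v).PosSemidef := by
  have hconv : Convex ℝ {v : Sym2 (Fin p) → ℝ | (symMat p v).PosSemidef} := by
    intro a ha b hb s t hs ht _
    change (symMat p (s • a + t • b)).PosSemidef
    rw [map_add, map_smul, map_smul]
    exact (PosSemidef.smul ha hs).add (PosSemidef.smul hb ht)
  refine convexHull_min ?_ hconv hv
  rintro _ ⟨x, _, rfl⟩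
  exact posSemidef_symMat_infoVec q β hν0 x

/-! ### Convex geometry -/

/-- The convex hull is the continuous image of a product of a standard simplex with copies of `s`,
by Carathéodory's theorem; shorter combinations are padded with zero weights. -/
theorem isCompact_convexHull_of_isCompact {E : Type*} [NormedAddCommGroup E] [NormedSpace ℝ E]
    [FiniteDimensional ℝ E] {s : Set E} (hs : IsCompact s) : IsCompact (convexHull ℝ s) := by
  rcases s.eq_empty_or_nonempty with rfl | ⟨x₀, hx₀⟩
  · simp
  set n := Module.finrank ℝ E + 1
  have hdom : IsCompact (stdSimplex ℝ (Fin n) ×ˢ Set.univ.pi (fun _ : Fin n => s)) :=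
    (isCompact_stdSimplex ℝ (Fin n)).prod (isCompact_univ_pi fun _ => hs)
  have hcont : Continuous fun wz : (Fin n → ℝ) × (Fin n → E) => ∑ i, wz.1 i • wz.2 i := by
    fun_prop
  convert hdom.image hcont using 1
  apply Set.Subset.antisymm
  · intro x hx
    obtain ⟨ι, hι, z, w, hz, haff, hw, hw1, hwx⟩ := eq_pos_convex_span_of_mem_convexHull hx
    have hcard : Fintype.card ι ≤ Fintype.card (Fin n) := by
      rw [Fintype.card_fin]
      exact haff.card_le_finrank_succ.trans
        (Nat.add_le_add_right (Submodule.finrank_le _) 1)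
    obtain ⟨e⟩ := Function.Embedding.nonempty_of_card_le hcard
    have hout : ∀ i ∉ Set.range e, Function.extend e w 0 i = 0 := fun i hi => by
      rw [Function.extend_apply' _ _ _ (by simpa using hi)]
      rfl
    refine ⟨(Function.extend e w 0, Function.extend e z fun _ => x₀), ⟨⟨fun i => ?_, ?_⟩, ?_⟩, ?_⟩
    · by_cases hi : i ∈ Set.range e
      · obtain ⟨k, rfl⟩ := hi
        simpa [e.injective.extend_apply] using (hw k).le
      · exact (hout i hi).ge
    · rw [← hw1]
      exact (Fintype.sum_of_injective e e.injective _ _ hout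
        fun i => (e.injective.extend_apply _ _ _).symm).symm
    · intro i _
      by_cases hi : i ∈ Set.range e
      · obtain ⟨k, rfl⟩ := hi
        simpa [e.injective.extend_apply] using hz ⟨k, rfl⟩
      · simpa [Function.extend_apply' z (fun _ => x₀) i (by simpa using hi)] using hx₀
    · rw [← hwx]
      refine (Fintype.sum_of_injective e e.injective _ _ (fun i hi => ?_) fun i => ?_).symm
      · simp [hout i hi]
      · simp [e.injective.extend_apply]
  · rintro _ ⟨⟨w, z⟩, ⟨⟨hw0, hw1⟩, hz⟩, rfl⟩
    exact (convex_convexHull ℝ s).sum_mem (fun i _ => hw0 i) hw1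
      fun i _ => subset_convexHull ℝ s (hz i trivial)

/-- If no dilate `t • x` with `t > 1` lies in the convex hull of `s`, then the points of an affinely
independent, positively weighted convex representation of `x` are linearly independent. -/
theorem linearIndependent_of_maximal {E : Type*} [AddCommGroup E] [Module ℝ E] {s : Set E} {x : E}
    (hmax : ∀ t : ℝ, 1 < t → t • x ∉ convexHull ℝ s) {ι : Type*} [Fintype ι] {z : ι → E}
    {w : ι → ℝ} (hz : Set.range z ⊆ s) (haff : AffineIndependent ℝ z) (hw : ∀ i, 0 < w i)
    (hw1 : ∑ i, w i = 1) (hwx : ∑ i, w i • z i = x) : LinearIndependent ℝ z := by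
  -- No linear relation has positive coefficient sum.
  have key : ∀ c : ι → ℝ, ∑ i, c i • z i = 0 → ¬ 0 < ∑ i, c i := by
    intro c hc hpos
    have hev : ∀ᶠ t : ℝ in nhdsWithin 0 (Set.Ioi 0),
        (∀ i, 0 < w i - t * c i) ∧ 0 < 1 - t * ∑ i, c i := by
      refine Filter.Eventually.filter_mono nhdsWithin_le_nhds ?_
      refine (Filter.eventually_all.2 fun i => ?_).and ?_
      · have : Continuous fun t : ℝ => w i - t * c i := by fun_prop
        exact this.continuousAt.eventually_const_lt (by simpa using hw i)
      · have : Continuous fun t : ℝ => 1 - t * ∑ i, c i := by fun_prop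
        exact this.continuousAt.eventually_const_lt (by simp)
    obtain ⟨t, ⟨htw, ht1⟩, ht0⟩ := (hev.and self_mem_nhdsWithin).exists
    have ht0 : 0 < t := ht0
    set r := 1 - t * ∑ i, c i with hr
    have hr1 : r < 1 := by
      have := mul_pos ht0 hpos
      linarith
    have hsum : ∑ i, (w i - t * c i) = r := by
      rw [Finset.sum_sub_distrib, hw1, ← Finset.mul_sum]
    have hx' : ∑ i, (w i - t * c i) • z i = x := by
      simp only [sub_smul, mul_smul, Finset.sum_sub_distrib, ← Finset.smul_sum, hc, hwx]
      simp
    refine hmax r⁻¹ ((one_lt_inv₀ ht1).2 hr1) ?_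
    rw [← hx', Finset.smul_sum]
    simp only [smul_smul]
    refine (convex_convexHull ℝ s).sum_mem (fun i _ => ?_) ?_
      fun i _ => subset_convexHull ℝ s (hz ⟨i, rfl⟩)
    · exact mul_nonneg (inv_nonneg.2 ht1.le) (htw i).le
    · rw [← Finset.mul_sum, hsum, inv_mul_cancel₀ ht1.ne']
  rw [Fintype.linearIndependent_iff]
  intro c hc i
  have h1 := key c hc
  have h2 := key (fun i => -c i) (by simp [hc])
  have hc0 : ∑ i, c i = 0 := by
    rw [Finset.sum_neg_distrib] at h2
    linarith
  exact affineIndependent_iff.1 haff Finset.univ c hc0 hc i (Finset.mem_univ i)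

/-! ### Information matrices of measures -/

theorem exists_mem_convexHull_symMat_eq {d p : ℕ} {X : Set (Fin d → ℝ)} (hX : IsCompact X)
    {q : (Fin d → ℝ) → (Fin p → ℝ)} (hq : ContinuousOn q X) (β : Fin p → ℝ) {ν : ℝ → ℝ}
    (hν : Continuous ν) (ξ : Measure (Fin d → ℝ)) [IsProbabilityMeasure ξ] (hξ : ξ Xᶜ = 0) :
    ∃ v ∈ convexHull ℝ (infoVec q β ν '' X), symMat p v = Fmat q β ν ξ := by
  have hg := continuousOn_infoVec hq β hν
  have hae : ∀ᵐ x ∂ξ, x ∈ X := hξ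
  have hint : Integrable (infoVec q β ν) ξ := by
    have := hg.integrableOn_compact (μ := ξ) hX
    rwa [IntegrableOn, Measure.restrict_eq_self_of_ae_mem hae] at this
  refine ⟨∫ x, infoVec q β ν x ∂ξ, ?_, ?_⟩
  · refine (convex_convexHull ℝ _).integral_mem
      (isCompact_convexHull_of_isCompact (hX.image_of_continuousOn hg)).isClosed ?_ hint
    filter_upwards [hae] with x hx
    exact subset_convexHull ℝ _ ⟨x, hx, rfl⟩
  · ext i j
    exact eval_integral (fun s => hint.eval s) s(i, j)

/-- The finitely supported measure with mass `w i` at `x i`. -/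
noncomputable def discreteMeasure {d : ℕ} {ι : Type*} [Fintype ι] (w : ι → ℝ)
    (x : ι → Fin d → ℝ) : Measure (Fin d → ℝ) :=
  ∑ i, ENNReal.ofReal (w i) • Measure.dirac (x i)

theorem Fmat_discreteMeasure {d p : ℕ} {ι : Type*} [Fintype ι] {w : ι → ℝ} (hw : ∀ i, 0 < w i)
    (x : ι → Fin d → ℝ) (q : (Fin d → ℝ) → (Fin p → ℝ)) (β : Fin p → ℝ) (ν : ℝ → ℝ) :
    Fmat q β ν (discreteMeasure w x) = symMat p (∑ i, w i • infoVec q β ν (x i)) := by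
  ext i j
  have hrhs : symMat p (∑ k, w k • infoVec q β ν (x k)) i j
      = ∑ k, w k * (ν (β ⬝ᵥ q (x k)) * (q (x k) i * q (x k) j)) := by
    change (∑ k, w k • infoVec q β ν (x k)) s(i, j) = _
    simp [Finset.sum_apply, infoVec_mk]
  rw [hrhs, Fmat, discreteMeasure, integral_finsetSum_measure]
  · refine Finset.sum_congr rfl fun k _ => ?_
    rw [integral_smul_measure, integral_dirac, ENNReal.toReal_ofReal (hw k).le, smul_eq_mul]
  · intro k _
    exact (integrable_dirac enorm_lt_top).smul_measure ENNReal.ofReal_ne_top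

theorem stmt16 {d p : ℕ} (hd : 1 ≤ d) (hp : 2 ≤ p)
    (𝒳 : Set (Fin d → ℝ)) (h𝒳ne : 𝒳.Nonempty) (h𝒳c : IsCompact 𝒳)
    (q : (Fin d → ℝ) → (Fin p → ℝ)) (hq : ContinuousOn q 𝒳)
    (β : Fin p → ℝ) (ν : ℝ → ℝ) (hν : Continuous ν) (hν0 : ∀ t, 0 ≤ ν t)
    (ξ₀ : Measure (Fin d → ℝ)) (hξ₀p : IsProbabilityMeasure ξ₀)
    (hξ₀s : ξ₀ 𝒳ᶜ = 0) (hξ₀d : 0 < (Fmat q β ν ξ₀).det) :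
    ∃ (ξstar : Measure (Fin d → ℝ)) (T : Finset (Fin d → ℝ)),
      IsProbabilityMeasure ξstar ∧ ↑T ⊆ 𝒳 ∧ T.card ≤ p * (p + 1) / 2 ∧
      ξstar (↑T : Set (Fin d → ℝ))ᶜ = 0 ∧
      ∀ ξ : Measure (Fin d → ℝ), IsProbabilityMeasure ξ → ξ 𝒳ᶜ = 0 →
        hMeas q β ν ξ ≤ hMeas q β ν ξstar := by
  have hg := continuousOn_infoVec hq β hν
  set K := convexHull ℝ (infoVec q β ν '' 𝒳) with hK
  have hKc : IsCompact K := isCompact_convexHull_of_isCompact (h𝒳c.image_of_continuousOn hg)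
  have hKne : K.Nonempty := (h𝒳ne.image _).convexHull
  have hpsd : ∀ v ∈ K, (symMat p v).PosSemidef :=
    fun v hv => posSemidef_symMat_of_mem q β hν0 𝒳 hv
  -- Near `v` the criterion is dominated by the linear functional that is tight at `v`.
  have husc : UpperSemicontinuousOn (fun v => hMat (symMat p v)) K := by
    rw [upperSemicontinuousOn_iff]
    intro v hv c hc
    obtain ⟨A, hA, hAe⟩ := exists_hMat_eq hp (hpsd v hv)
    have hcont : Continuous fun u => (Aᵀ * symMat p u * A).trace := by
      have hlin : Continuous (symMat p) := LinearMap.continuous_of_finiteDimensional _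
      fun_prop
    have hlt : (Aᵀ * symMat p v * A).trace < c := hAe.trans_lt hc
    filter_upwards [nhdsWithin_le_nhds (hcont.continuousAt.eventually_lt_const hlt),
      self_mem_nhdsWithin] with u hu huK
    exact (hMat_le (hpsd u huK) hA).trans_lt hu
  obtain ⟨v, hvK, hvmax⟩ := husc.exists_isMaxOn hKne hKc
  have hvmax : ∀ u ∈ K, hMat (symMat p u) ≤ hMat (symMat p v) := fun u hu => hvmax hu
  have hpos : 0 < hMat (symMat p v) := by
    obtain ⟨u, huK, hu⟩ := exists_mem_convexHull_symMat_eq h𝒳c hq β hν ξ₀ hξ₀s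
    refine lt_of_lt_of_le ?_ (hvmax u huK)
    have : Nonempty (Fin p) := ⟨⟨0, by omega⟩⟩
    have hdet : 0 < (symMat p u).det := by rwa [hu]
    have hpd : (symMat p u).PosDef := (hpsd u huK).posDef_iff_det_ne_zero.2 hdet.ne'
    rw [hMat, if_pos hdet]
    exact inv_pos.2 hpd.inv.trace_pos
  have hdil : ∀ t : ℝ, 1 < t → t • v ∉ K := by
    intro t ht htK
    have h1 := hvmax _ htK
    rw [map_smul] at h1
    have h2 := mul_hMat_le hp (hpsd v hvK) (zero_le_one.trans ht.le)
    nlinarith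
  obtain ⟨ι, hι, z, w, hz, haff, hw, hw1, hwv⟩ := eq_pos_convex_span_of_mem_convexHull hvK
  have hli : LinearIndependent ℝ z := linearIndependent_of_maximal hdil hz haff hw hw1 hwv
  have hcard : Fintype.card ι ≤ p * (p + 1) / 2 := by
    have h := hli.fintype_card_le_finrank
    rwa [Module.finrank_fintype_fun_eq_card, Sym2.card, Fintype.card_fin, Nat.choose_two_right,
      Nat.add_sub_cancel, mul_comm] at h
  have hx : ∀ i, ∃ x ∈ 𝒳, infoVec q β ν x = z i := fun i => hz ⟨i, rfl⟩
  choose x hxX hxz using hx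
  classical
  refine ⟨discreteMeasure w x, Finset.univ.image x, ⟨?_⟩, ?_, ?_, ?_, ?_⟩
  · simp only [discreteMeasure, Measure.coe_finsetSum, Finset.sum_apply, Measure.smul_apply,
      measure_univ, smul_eq_mul, mul_one]
    rw [← ENNReal.ofReal_sum_of_nonneg fun i _ => (hw i).le, hw1, ENNReal.ofReal_one]
  · intro y hy
    obtain ⟨i, _, rfl⟩ := Finset.mem_image.1 (Finset.mem_coe.1 hy)
    exact hxX i
  · exact Finset.card_image_le.trans hcard
  · simp [discreteMeasure, Measure.dirac_apply]
  · intro ξ hξp hξs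
    obtain ⟨u, huK, hu⟩ := exists_mem_convexHull_symMat_eq h𝒳c hq β hν ξ hξs
    have hstar : Fmat q β ν (discreteMeasure w x) = symMat p v := by
      rw [Fmat_discreteMeasure hw, ← hwv]
      simp only [hxz]
    change hMat (Fmat q β ν ξ) ≤ hMat (Fmat q β ν (discreteMeasure w x))
    rw [hstar, ← hu]
    exact hvmax u huK
end

section
/- Let p ≥ 2, let 𝒳 ⊆ ℝ^d be a nonempty compact set, q : ℝ^d → ℝ^p continuous on 𝒳, β ∈ ℝ^p, and ν : ℝ → ℝ continuous with ν ≥ 0. Let ξ be a finitely supported Borel probability measure on 𝒳 with det F(ξ) > 0. Then h(ξ) ≥ h(ξ') for every Borel probability measure ξ' on 𝒳 if and only if sup_{x ∈ 𝒳} φ(x, ξ) ≤ tr(F(ξ)⁻¹), where φ(x, ξ) = ν(βᵀq(x)) · q(x)ᵀ F(ξ)⁻² q(x). -/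
/-!
Write `M = F(ξ)`, `G = F(ξ')`. For positive definite `M`, `G` the matrix
`(G⁻¹ - M⁻¹) G (G⁻¹ - M⁻¹)` is positive semidefinite, and taking traces gives the tangent
inequality `2 tr M⁻¹ ≤ tr G⁻¹ + tr (M⁻² G)` (`two_trace_inv_le`). Moreover
`tr (A F(ξ')) = ∫ ν(βᵀq) qᵀ A q dξ'` for every matrix `A` (`trace_mul_Fmat`), so `tr (M⁻² G)` is
the `ξ'`-average of `φ(·, ξ)`.

If `φ(·, ξ) ≤ tr M⁻¹` on `𝒳`, averaging yields `tr (M⁻² G) ≤ tr M⁻¹`, hence `tr M⁻¹ ≤ tr G⁻¹`.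

Conversely, let `ξ` be optimal, `x ∈ 𝒳`, `G_t = (1 - t) M + t F_x`. The tangent inequality at
`G_t`, together with `tr M⁻¹ ≤ tr G_t⁻¹`, gives `tr G_t⁻¹ ≤ tr (G_t⁻² M)`. Since
`tr G_t⁻¹ = tr (G_t⁻² G_t) = (1 - t) tr (G_t⁻² M) + t tr (G_t⁻² F_x)`, it follows that
`tr (G_t⁻² F_x) ≤ tr G_t⁻¹` for `0 < t < 1`, and letting `t → 0` gives `φ(x, ξ) ≤ tr M⁻¹`.
No derivative of the criterion is needed.
-/

open Matrix MeasureTheory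

/-- The tangent (convexity) inequality for `G ↦ tr G⁻¹` at `M`. -/
theorem two_trace_inv_le {p : ℕ} {M G : Matrix (Fin p) (Fin p) ℝ} (hM : M.PosDef)
    (hG : G.PosDef) : 2 * (M⁻¹).trace ≤ (G⁻¹).trace + (M⁻¹ * M⁻¹ * G).trace := by
  have hGu : IsUnit G.det := (Matrix.isUnit_iff_isUnit_det G).mp hG.isUnit
  have hh : (G⁻¹ - M⁻¹)ᴴ = G⁻¹ - M⁻¹ := by
    rw [conjTranspose_sub, hM.inv.isHermitian.eq, hG.inv.isHermitian.eq]
  have h0 := (hG.posSemidef.mul_mul_conjTranspose_same (G⁻¹ - M⁻¹)).trace_nonneg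
  have he : (G⁻¹ - M⁻¹) * G * (G⁻¹ - M⁻¹) = G⁻¹ - M⁻¹ - M⁻¹ + M⁻¹ * G * M⁻¹ := by
    rw [Matrix.sub_mul, Matrix.nonsing_inv_mul _ hGu, Matrix.sub_mul, Matrix.one_mul,
      Matrix.mul_sub, Matrix.mul_assoc M⁻¹ G G⁻¹, Matrix.mul_nonsing_inv _ hGu, Matrix.mul_one]
    abel
  rw [hh, he, trace_add, trace_sub, trace_sub, Matrix.trace_mul_cycle] at h0
  linarith

/-- The core of the necessity direction: if `tr M⁻¹ ≤ tr G⁻¹` for `G = (1 - t) M + t N`, then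
`tr (G⁻² N) ≤ tr G⁻¹`. -/
theorem trace_le_of_segment {p : ℕ} {M N G : Matrix (Fin p) (Fin p) ℝ} (hM : M.PosDef)
    (hG : G.PosDef) {t : ℝ} (ht0 : 0 < t) (ht1 : t < 1) (hGt : G = (1 - t) • M + t • N)
    (hle : (M⁻¹).trace ≤ (G⁻¹).trace) : (G⁻¹ * G⁻¹ * N).trace ≤ (G⁻¹).trace := by
  have hGu : IsUnit G.det := (Matrix.isUnit_iff_isUnit_det G).mp hG.isUnit
  have h1 := two_trace_inv_le hG hM
  have h2 : (G⁻¹).trace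
      = (1 - t) * (G⁻¹ * G⁻¹ * M).trace + t * (G⁻¹ * G⁻¹ * N).trace := by
    have h3 : G⁻¹ * G⁻¹ * G = G⁻¹ := by
      rw [Matrix.mul_assoc, Matrix.nonsing_inv_mul _ hGu, Matrix.mul_one]
    have h4 : (G⁻¹ * G⁻¹ * ((1 - t) • M + t • N)).trace
        = (1 - t) * (G⁻¹ * G⁻¹ * M).trace + t * (G⁻¹ * G⁻¹ * N).trace := by
      simp [Matrix.mul_add, trace_add, trace_smul]
    rw [← h4, ← hGt, h3]
  have h5 : (G⁻¹).trace ≤ (G⁻¹ * G⁻¹ * M).trace := by linarith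
  have h6 : t * (G⁻¹ * G⁻¹ * N).trace ≤ t * (G⁻¹).trace := by nlinarith
  exact le_of_mul_le_mul_left h6 ht0

section Information

variable {d p : ℕ} {𝒳 : Set (Fin d → ℝ)} {q : (Fin d → ℝ) → (Fin p → ℝ)} {β : Fin p → ℝ}
  {ν : ℝ → ℝ}

theorem integrable_entry (h𝒳c : IsCompact 𝒳) (hq : ContinuousOn q 𝒳) (hν : Continuous ν)
    (μ : Measure (Fin d → ℝ)) [IsProbabilityMeasure μ] (hμ : μ 𝒳ᶜ = 0) (i j : Fin p) :
    Integrable (fun x => ν (β ⬝ᵥ q x) * (q x i * q x j)) μ := by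
  have hqi : ∀ k, ContinuousOn (fun x => q x k) 𝒳 := fun k => continuousOn_pi.mp hq k
  have hdot : ContinuousOn (fun x => β ⬝ᵥ q x) 𝒳 := by
    simp only [dotProduct]
    exact continuousOn_finsetSum _ fun k _ => continuousOn_const.mul (hqi k)
  have hc : ContinuousOn (fun x => ν (β ⬝ᵥ q x) * (q x i * q x j)) 𝒳 :=
    (hν.comp_continuousOn hdot).mul ((hqi i).mul (hqi j))
  have h := hc.integrableOn_compact (μ := μ) h𝒳c
  rwa [IntegrableOn, Measure.restrict_eq_self_of_ae_mem (by exact hμ)] at h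

theorem quad_eq_sum (c : ℝ) (v : Fin p → ℝ) (A : Matrix (Fin p) (Fin p) ℝ) :
    c * (v ⬝ᵥ A.mulVec v) = ∑ i, ∑ j, A i j * (c * (v j * v i)) := by
  simp only [dotProduct, mulVec, Finset.mul_sum]
  exact Finset.sum_congr rfl fun i _ => Finset.sum_congr rfl fun j _ => by ring

theorem integrable_quad (h𝒳c : IsCompact 𝒳) (hq : ContinuousOn q 𝒳) (hν : Continuous ν)
    (μ : Measure (Fin d → ℝ)) [IsProbabilityMeasure μ] (hμ : μ 𝒳ᶜ = 0)
    (A : Matrix (Fin p) (Fin p) ℝ) :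
    Integrable (fun x => ν (β ⬝ᵥ q x) * (q x ⬝ᵥ A.mulVec (q x))) μ := by
  simp only [quad_eq_sum]
  exact integrable_finsetSum _ fun i _ => integrable_finsetSum _ fun j _ =>
    (integrable_entry h𝒳c hq hν μ hμ j i).const_mul _

theorem trace_mul_Fmat (h𝒳c : IsCompact 𝒳) (hq : ContinuousOn q 𝒳) (hν : Continuous ν)
    (μ : Measure (Fin d → ℝ)) [IsProbabilityMeasure μ] (hμ : μ 𝒳ᶜ = 0)
    (A : Matrix (Fin p) (Fin p) ℝ) :
    (A * Fmat q β ν μ).trace = ∫ x, ν (β ⬝ᵥ q x) * (q x ⬝ᵥ A.mulVec (q x)) ∂μ := by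
  have hi := fun i j => (integrable_entry (β := β) h𝒳c hq hν μ hμ j i).const_mul (A i j)
  simp only [quad_eq_sum]
  rw [integral_finsetSum _ fun i _ => integrable_finsetSum _ fun j _ => hi i j]
  simp only [Matrix.trace, diag, mul_apply]
  refine Finset.sum_congr rfl fun i _ => ?_
  rw [integral_finsetSum _ fun j _ => hi i j]
  refine Finset.sum_congr rfl fun j _ => ?_
  rw [integral_const_mul]
  rfl

theorem Fmat_posSemidef (h𝒳c : IsCompact 𝒳) (hq : ContinuousOn q 𝒳) (hν : Continuous ν)
    (hν0 : ∀ t, 0 ≤ ν t) (μ : Measure (Fin d → ℝ)) [IsProbabilityMeasure μ] (hμ : μ 𝒳ᶜ = 0) :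
    (Fmat q β ν μ).PosSemidef := by
  refine PosSemidef.of_dotProduct_mulVec_nonneg ?_ fun v => ?_
  · ext i j
    simp only [conjTranspose_apply, star_trivial, Fmat]
    simp only [mul_comm]
  · -- `vᵀ F v = tr (v vᵀ F)` is the integral of `ν (βᵀq) (vᵀ q)²`.
    have h1 : star v ⬝ᵥ (Fmat q β ν μ).mulVec v = (vecMulVec v v * Fmat q β ν μ).trace := by
      rw [vecMulVec_mul, trace_vecMulVec, star_trivial, dotProduct_mulVec, dotProduct_comm]
    rw [h1, trace_mul_Fmat h𝒳c hq hν μ hμ]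
    refine integral_nonneg fun x => mul_nonneg (hν0 _) ?_
    rw [vecMulVec_mulVec, dotProduct_smul, dotProduct_comm (q x) v]
    exact mul_self_nonneg _

theorem posDef_of_det_pos {M : Matrix (Fin p) (Fin p) ℝ} (hM : M.PosSemidef) (h : 0 < M.det) :
    M.PosDef :=
  hM.posDef_iff_isUnit.mpr ((Matrix.isUnit_iff_isUnit_det M).mpr h.ne'.isUnit)

theorem Fmat_mix (h𝒳c : IsCompact 𝒳) (hq : ContinuousOn q 𝒳) (hν : Continuous ν)
    (μ μ' : Measure (Fin d → ℝ)) [IsProbabilityMeasure μ] [IsProbabilityMeasure μ']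
    (hμ : μ 𝒳ᶜ = 0) (hμ' : μ' 𝒳ᶜ = 0) {t : ℝ} (ht0 : 0 ≤ t) (ht1 : t ≤ 1) :
    Fmat q β ν (ENNReal.ofReal (1 - t) • μ + ENNReal.ofReal t • μ')
      = (1 - t) • Fmat q β ν μ + t • Fmat q β ν μ' := by
  ext i j
  simp only [Fmat, Matrix.add_apply, Matrix.smul_apply]
  rw [integral_add_measure
    ((integrable_entry h𝒳c hq hν μ hμ i j).smul_measure ENNReal.ofReal_ne_top)
    ((integrable_entry h𝒳c hq hν μ' hμ' i j).smul_measure ENNReal.ofReal_ne_top),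
    integral_smul_measure, integral_smul_measure, ENNReal.toReal_ofReal (by linarith),
    ENNReal.toReal_ofReal ht0]

end Information

theorem continuousAt_inv_of_det_ne_zero {p : ℕ} {G : ℝ → Matrix (Fin p) (Fin p) ℝ} (hG : Continuous G)
    {s : ℝ} (hs : (G s).det ≠ 0) : ContinuousAt (fun t => (G t)⁻¹) s := by
  simp only [Matrix.inv_def, Ring.inverse_eq_inv']
  exact (hG.matrix_det.continuousAt.inv₀ hs).smul hG.matrix_adjugate.continuousAt

theorem stmt17 {d p : ℕ} (hd : 1 ≤ d) (hp : 2 ≤ p)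
    (𝒳 : Set (Fin d → ℝ)) (h𝒳ne : 𝒳.Nonempty) (h𝒳c : IsCompact 𝒳)
    (q : (Fin d → ℝ) → (Fin p → ℝ)) (hq : ContinuousOn q 𝒳)
    (β : Fin p → ℝ) (ν : ℝ → ℝ) (hν : Continuous ν) (hν0 : ∀ t, 0 ≤ ν t)
    (ξ : Measure (Fin d → ℝ)) (hξp : IsProbabilityMeasure ξ) (hξs : ξ 𝒳ᶜ = 0)
    (T : Finset (Fin d → ℝ)) (hT : ↑T ⊆ 𝒳) (hξT : ξ (↑T : Set (Fin d → ℝ))ᶜ = 0)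
    (hξd : 0 < (Fmat q β ν ξ).det) :
    (∀ ξ' : Measure (Fin d → ℝ), IsProbabilityMeasure ξ' → ξ' 𝒳ᶜ = 0 →
        hMeas q β ν ξ' ≤ hMeas q β ν ξ)
      ↔ ∀ x ∈ 𝒳,
          ν (β ⬝ᵥ q x) * (q x ⬝ᵥ ((Fmat q β ν ξ)⁻¹ * (Fmat q β ν ξ)⁻¹).mulVec (q x))
            ≤ ((Fmat q β ν ξ)⁻¹).trace := by
  have hM : (Fmat q β ν ξ).PosDef :=
    posDef_of_det_pos (Fmat_posSemidef h𝒳c hq hν hν0 ξ hξs) hξd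
  have : Nonempty (Fin p) := ⟨⟨0, by omega⟩⟩
  have htr : 0 < ((Fmat q β ν ξ)⁻¹).trace := hM.inv.trace_pos
  constructor
  · intro hopt x hx
    have hdx : (Measure.dirac x) 𝒳ᶜ = 0 := by
      rw [Measure.dirac_apply' _ h𝒳c.measurableSet.compl]
      simp [hx]
    set N := Fmat q β ν (Measure.dirac x) with hN
    set M := Fmat q β ν ξ with hMdef
    have hNp : N.PosSemidef := Fmat_posSemidef h𝒳c hq hν hν0 _ hdx
    have hφ : (M⁻¹ * M⁻¹ * N).trace
        = ν (β ⬝ᵥ q x) * (q x ⬝ᵥ (M⁻¹ * M⁻¹).mulVec (q x)) := by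
      rw [hN, trace_mul_Fmat h𝒳c hq hν _ hdx, integral_dirac]
    rw [← hφ]
    let G : ℝ → Matrix (Fin p) (Fin p) ℝ := fun t => (1 - t) • M + t • N
    have hG0 : G 0 = M := by simp [G]
    have hGc : Continuous G := by fun_prop
    have hinv : ContinuousAt (fun t => (G t)⁻¹) 0 :=
      continuousAt_inv_of_det_ne_zero hGc (by rw [hG0]; exact hξd.ne')
    have hkey : ∀ t ∈ Set.Ioo (0 : ℝ) 1,
        ((G t)⁻¹ * (G t)⁻¹ * N).trace ≤ ((G t)⁻¹).trace := by
      rintro t ⟨ht0, ht1⟩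
      have hGp : (G t).PosDef := (hM.smul (by linarith : 0 < 1 - t)).add_posSemidef
        (hNp.smul ht0.le)
      refine trace_le_of_segment hM hGp ht0 ht1 rfl ?_
      have hmix := Fmat_mix (β := β) h𝒳c hq hν ξ (Measure.dirac x) hξs hdx ht0.le ht1.le
      have h1 := hopt (ENNReal.ofReal (1 - t) • ξ + ENNReal.ofReal t • Measure.dirac x)
        ⟨by
          simp only [Measure.add_apply, Measure.smul_apply, measure_univ, smul_eq_mul, mul_one]
          rw [← ENNReal.ofReal_add (by linarith) ht0.le]
          simp⟩
        (by simp only [Measure.add_apply, Measure.smul_apply, hξs, hdx, smul_zero, add_zero])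
      rw [hMeas, hMeas, hmix, if_pos hξd, if_pos hGp.det_pos] at h1
      exact (inv_le_inv₀ hGp.inv.trace_pos htr).mp h1
    have hl : Filter.Tendsto (fun t => ((G t)⁻¹ * (G t)⁻¹ * N).trace)
        (nhdsWithin 0 (Set.Ioi 0)) (nhds (M⁻¹ * M⁻¹ * N).trace) := by
      have h : ContinuousAt (fun t => ((G t)⁻¹ * (G t)⁻¹ * N).trace) 0 :=
        (Continuous.matrix_trace (A := fun B : Matrix (Fin p) (Fin p) ℝ => B * B * N)
          (by fun_prop)).continuousAt.comp hinv
      simpa only [ContinuousAt, hG0] using h.tendsto.mono_left nhdsWithin_le_nhds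
    have hr : Filter.Tendsto (fun t => ((G t)⁻¹).trace)
        (nhdsWithin 0 (Set.Ioi 0)) (nhds (M⁻¹).trace) := by
      have h : ContinuousAt (fun t => ((G t)⁻¹).trace) 0 :=
        (Continuous.matrix_trace (A := fun B : Matrix (Fin p) (Fin p) ℝ => B)
          continuous_id).continuousAt.comp hinv
      simpa only [ContinuousAt, hG0] using h.tendsto.mono_left nhdsWithin_le_nhds
    refine le_of_tendsto_of_tendsto hl hr ?_
    filter_upwards [Ioo_mem_nhdsGT (zero_lt_one (α := ℝ))] with t ht using hkey t ht
  · intro hφ ξ' hξ'p hξ's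
    rw [hMeas, hMeas, if_pos hξd]
    split_ifs with hdet
    · have hG : (Fmat q β ν ξ').PosDef :=
        posDef_of_det_pos (Fmat_posSemidef h𝒳c hq hν hν0 ξ' hξ's) hdet
      have h1 := two_trace_inv_le hM hG
      have h2 : ((Fmat q β ν ξ)⁻¹ * (Fmat q β ν ξ)⁻¹ * Fmat q β ν ξ').trace
          ≤ ((Fmat q β ν ξ)⁻¹).trace := by
        rw [trace_mul_Fmat h𝒳c hq hν ξ' hξ's]
        have hae : ∀ᵐ x ∂ξ', x ∈ 𝒳 := hξ's
        refine (integral_mono_ae (integrable_quad h𝒳c hq hν ξ' hξ's _) (integrable_const _)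
          (hae.mono hφ)).trans ?_
        simp
      exact inv_anti₀ htr (by linarith)
    · exact (inv_pos.mpr htr).le
end

section
/- Let p ≥ 2, let M be a p×p real symmetric positive semidefinite matrix with det M > 0, let N = ν* q q*ᵀ for some q ∈ ℝ^p and ν* ≥ 0 (a positive semidefinite matrix of rank at most one), and for α ∈ [0,1] define M(α) = (1−α)M + αN and g(α) = (tr(M(α)⁻¹))⁻¹ if det M(α) > 0, g(α) = 0 otherwise. Define b_t = det M, a_t = 2^p det((M+N)/2) − b_t, and for j = 1,…,p let b_j^{(t)} be the determinant of the (p−1)×(p−1) submatrix of M obtained by deleting the j-th row and j-th column, a_j^{(t)} = 2^{p−1} det of the corresponding submatrix of (M+N)/2 minus b_j^{(t)}, A_t = Σ_{j=1}^p a_j^{(t)}, and B_t = Σ_{j=1}^p b_j^{(t)}. If A_t ≠ B_t, A_t > 0, B_t > 0, a_t > b_t, a_tB_t > b_tA_t, and b_tA_t < (a_t−b_t)B_t, then g attains its maximum over [0,1] at the unique point α_t = (√(A_t(a_tB_t − b_tA_t)/(a_t − b_t)) − B_t)/(A_t − B_t), and α_t ∈ (0,1). -/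
/-!
Since `N` has rank one, the determinant of `M + t N` is affine in `t` (matrix determinant lemma),
and the same holds for every principal minor. Hence for `α < 1`
`det M(α) = (1 - α) ^ (p - 1) * ((1 - α) b + α a)` and the sum of the principal `(p - 1)`-minors,
which is the trace of the adjugate, is `(1 - α) ^ (p - 2) * ((1 - α) B + α A)`
(`det_segment`). Dividing, with `c = a - b`, `D = A - B`,
`g α = (1 - α) (b + c α) / (B + D α)` on `[0, 1]`.

In the variable `u = B + D α`, which runs between `B` and `A`, and with `K = a B - b A`, this is
`(A c + K - (c u + A K / u)) / D ^ 2`. The arithmetic-geometric mean inequality shows that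
`c u + A K / u` is smallest exactly at `s = √(A K / c)`, and the point `α` with
`B + D α = s` is `αt`. It lies in `(0, 1)` because `s` is strictly between `A` and `B`:
`c (A ^ 2 - s ^ 2) = A a D` and `c (s ^ 2 - B ^ 2) = D (c B - b A)`. The optimization step is
`ratio_max`.
-/

open Matrix

theorem det_add_smul_vecMulVec_s18 {n : ℕ} {M : Matrix (Fin n) (Fin n) ℝ} (hM : M.det ≠ 0)
    (u v : Fin n → ℝ) (t : ℝ) :
    (M + t • vecMulVec u v).det = M.det + t * ((M + vecMulVec u v).det - M.det) := by
  have key : ∀ w : Fin n → ℝ,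
      (M + vecMulVec w v).det = M.det * (1 + v ⬝ᵥ (M⁻¹ *ᵥ w)) := by
    intro w
    have hfac : M + vecMulVec w v = M * (1 + vecMulVec (M⁻¹ *ᵥ w) v) := by
      rw [mul_add, mul_one, mul_vecMulVec, mulVec_mulVec,
        mul_nonsing_inv _ (isUnit_iff_ne_zero.mpr hM), one_mulVec]
    rw [hfac, det_mul, vecMulVec_eq Unit, det_one_add_replicateCol_mul_replicateRow]
  rw [← smul_vecMulVec, key, key, mulVec_smul, dotProduct_smul, smul_eq_mul]
  ring

/-- The determinant along the segment from `M` to a rank-one matrix, in terms of its values at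
the endpoint `M` and the midpoint. -/
theorem det_segment {n : ℕ} {M : Matrix (Fin (n + 1)) (Fin (n + 1)) ℝ} (hM : M.det ≠ 0)
    (u v : Fin (n + 1) → ℝ) {α : ℝ} (hα : α < 1) :
    ((1 - α) • M + α • vecMulVec u v).det = (1 - α) ^ n * ((1 - α) * M.det
      + α * (2 ^ (n + 1) * ((2 : ℝ)⁻¹ • (M + vecMulVec u v)).det - M.det)) := by
  have hx : (1 - α) ≠ 0 := by linarith
  have hfac : (1 - α) • M + α • vecMulVec u v
      = (1 - α) • (M + (α / (1 - α)) • vecMulVec u v) := by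
    rw [smul_add, smul_smul, mul_div_cancel₀ _ hx]
  have htwo : (2 : ℝ) ^ (n + 1) * ((2 : ℝ)⁻¹ • (M + vecMulVec u v)).det
      = (M + vecMulVec u v).det := by
    rw [det_smul, Fintype.card_fin, ← mul_assoc, ← mul_pow]
    norm_num
  rw [htwo, hfac, det_smul, det_add_smul_vecMulVec_s18 hM, Fintype.card_fin]
  field_simp
  ring

theorem dropIdx_eq_succAbove {n : ℕ} (j : Fin (n + 1)) :
    (dropIdx j : Fin n → Fin (n + 1)) = j.succAbove := by
  funext k
  unfold dropIdx Fin.succAbove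
  simp only [Fin.lt_def, Fin.val_castSucc]
  split_ifs <;> rfl

theorem trace_inv_eq {n : ℕ} (X : Matrix (Fin (n + 1)) (Fin (n + 1)) ℝ) :
    X⁻¹.trace = X.det⁻¹ * ∑ j : Fin (n + 1), (X.submatrix j.succAbove j.succAbove).det := by
  rw [inv_def, trace_smul, Ring.inverse_eq_inv', smul_eq_mul, trace]
  congr 1
  refine Finset.sum_congr rfl fun j _ => ?_
  rw [diag_apply, adjugate_fin_succ_eq_det_submatrix, Even.neg_one_pow (Even.add_self _), one_mul]

/-- The optimization of `(1 - α) ((1 - α) b + α a) / ((1 - α) B + α A)` over `[0, 1]`. -/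
theorem ratio_max {a b A B s αt : ℝ} (hb : 0 < b) (h1 : A ≠ B) (h2 : 0 < A) (h3 : 0 < B)
    (h4 : b < a) (h6 : b * A < (a - b) * B) (hs0 : 0 ≤ s)
    (hs : (a - b) * s ^ 2 = A * (a * B - b * A)) (hαt : αt = (s - B) / (A - B)) :
    (0 < αt ∧ αt < 1) ∧
    ∀ α ∈ Set.Icc (0 : ℝ) 1, α ≠ αt →
      (1 - α) * ((1 - α) * b + α * a) / ((1 - α) * B + α * A)
        < (1 - αt) * ((1 - αt) * b + αt * a) / ((1 - αt) * B + αt * A) := by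
  have hD : A - B ≠ 0 := sub_ne_zero.mpr h1
  have hc : 0 < a - b := sub_pos.mpr h4
  have ha : 0 < a := hb.trans h4
  have hu : s = B + (A - B) * αt := by
    rw [hαt]; field_simp; ring
  have hD2 : 0 < (A - B) ^ 2 := by positivity
  -- Both bounds come from dividing the identities for `s ^ 2 - B ^ 2`, `A ^ 2 - s ^ 2` by `A - B`.
  have e1 : (a - b) * αt * (s + B) = (a - b) * B - b * A := by
    apply mul_left_cancel₀ hD
    have : (A - B) * αt = s - B := by rw [hu]; ring
    linear_combination (a - b) * (s + B) * this + hs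
  have e2 : (a - b) * (1 - αt) * (A + s) = A * a := by
    apply mul_left_cancel₀ hD
    have : (A - B) * (1 - αt) = A - s := by rw [hu]; ring
    linear_combination (a - b) * (A + s) * this - hs
  have hpos : 0 < αt := by
    by_contra! h
    have : (a - b) * αt * (s + B) ≤ 0 :=
      mul_nonpos_of_nonpos_of_nonneg (mul_nonpos_of_nonneg_of_nonpos hc.le h) (by positivity)
    linarith
  have hlt : αt < 1 := by
    by_contra! h
    have : (a - b) * (1 - αt) * (A + s) ≤ 0 :=
      mul_nonpos_of_nonpos_of_nonneg
        (mul_nonpos_of_nonneg_of_nonpos hc.le (by linarith)) (by positivity)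
    have : 0 < A * a := by positivity
    linarith
  have hden : ∀ x ∈ Set.Icc (0 : ℝ) 1, 0 < (1 - x) * B + x * A := by
    rintro x ⟨hx0, hx1⟩
    rcases hx0.eq_or_lt with rfl | hx
    · simpa using h3
    · have : 0 ≤ (1 - x) * B := mul_nonneg (by linarith) h3.le
      have : 0 < x * A := mul_pos hx h2
      linarith
  refine ⟨⟨hpos, hlt⟩, fun α hα hne => ?_⟩
  have hdα := hden α hα
  have hdt := hden αt ⟨hpos.le, hlt.le⟩
  rw [← sub_pos]
  -- The gap is `c (u - s) ^ 2 / (D ^ 2 u)` with `u - s = D (α - αt)`.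
  have hgap : (1 - αt) * ((1 - αt) * b + αt * a) / ((1 - αt) * B + αt * A)
      - (1 - α) * ((1 - α) * b + α * a) / ((1 - α) * B + α * A)
      = (a - b) * (α - αt) ^ 2 / ((1 - α) * B + α * A) := by
    -- The numerator of the derivative vanishes at `αt`.
    have hs' : (a - b) * (B + (A - B) * αt) ^ 2 = A * (a * B - b * A) := by rw [← hu]; exact hs
    have hfoc : (a - b) * (A - B) * αt ^ 2 + 2 * (a - b) * B * αt
        = (a - b) * B - b * A := by
      apply mul_left_cancel₀ hD
      linear_combination hs'
    rw [div_sub_div _ _ hdt.ne' hdα.ne', div_eq_div_iff (by positivity) hdα.ne']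
    linear_combination ((1 - α) * B + α * A) * (α - αt) * hfoc
  rw [hgap]
  have : 0 < (α - αt) ^ 2 := by
    have := sub_ne_zero.mpr hne
    positivity
  positivity

theorem stmt18 {p : ℕ} (hp : 2 ≤ p)
    (M : Matrix (Fin p) (Fin p) ℝ) (hM : M.PosSemidef) (hMdet : 0 < M.det)
    (q : Fin p → ℝ) (νstar : ℝ) (hνstar : 0 ≤ νstar)
    (N : Matrix (Fin p) (Fin p) ℝ) (hN : N = νstar • Matrix.vecMulVec q q)
    (g : ℝ → ℝ)
    (hg : ∀ α : ℝ, g α = if 0 < ((1 - α) • M + α • N).det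
        then ((((1 - α) • M + α • N)⁻¹).trace)⁻¹ else 0)
    (bt at' At Bt : ℝ)
    (hbt : bt = M.det)
    (hat : at' = 2 ^ p * ((2 : ℝ)⁻¹ • (M + N)).det - bt)
    (hBt : Bt = ∑ j, (M.submatrix (dropIdx j) (dropIdx j)).det)
    (hAt : At = ∑ j, (2 ^ (p - 1)
        * (((2 : ℝ)⁻¹ • (M + N)).submatrix (dropIdx j) (dropIdx j)).det
        - (M.submatrix (dropIdx j) (dropIdx j)).det))
    (h1 : At ≠ Bt) (h2 : 0 < At) (h3 : 0 < Bt) (h4 : bt < at')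
    (h5 : bt * At < at' * Bt) (h6 : bt * At < (at' - bt) * Bt)
    (αt : ℝ)
    (hαt : αt = (Real.sqrt (At * (at' * Bt - bt * At) / (at' - bt)) - Bt) / (At - Bt)) :
    (0 < αt ∧ αt < 1) ∧
    (∀ α ∈ Set.Icc (0 : ℝ) 1, g α ≤ g αt) ∧
    (∀ α ∈ Set.Icc (0 : ℝ) 1, g α = g αt → α = αt) := by
  obtain ⟨n, rfl⟩ : ∃ n, p = n + 2 := ⟨p - 2, by omega⟩
  have hPD : M.PosDef := hM.posDef_iff_det_ne_zero.mpr hMdet.ne'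
  have hN' : N = vecMulVec (νstar • q) q := by rw [hN, smul_vecMulVec]
  have hbpos : 0 < bt := hbt ▸ hMdet
  have hapos : 0 < at' := hbpos.trans h4
  have hdet : ∀ α : ℝ, α < 1 → ((1 - α) • M + α • N).det
      = (1 - α) ^ (n + 1) * ((1 - α) * bt + α * at') := by
    intro α hα
    rw [hat, hbt, hN', det_segment hMdet.ne' _ _ hα]
  have hminor : ∀ α : ℝ, α < 1 →
      ∑ j : Fin (n + 2), (((1 - α) • M + α • N).submatrix j.succAbove j.succAbove).det
        = (1 - α) ^ n * ((1 - α) * Bt + α * At) := by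
    intro α hα
    rw [hBt, hAt, Finset.mul_sum, Finset.mul_sum, ← Finset.sum_add_distrib, Finset.mul_sum]
    refine Finset.sum_congr rfl fun j _ => ?_
    have hj : (M.submatrix j.succAbove j.succAbove).det ≠ 0 :=
      (hPD.submatrix Fin.succAbove_right_injective).det_pos.ne'
    have := det_segment hj ((νstar • q) ∘ j.succAbove) (q ∘ j.succAbove) hα
    rw [hN']
    erw [dropIdx_eq_succAbove j]
    exact this
  have hgval : ∀ α ∈ Set.Icc (0 : ℝ) 1,
      g α = (1 - α) * ((1 - α) * bt + α * at') / ((1 - α) * Bt + α * At) := by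
    rintro α ⟨h0, hle⟩
    rcases hle.eq_or_lt with rfl | hlt
    · have : N.det = 0 := by rw [hN', det_vecMulVec]
      simp [hg, this]
    · have hx : 0 < 1 - α := sub_pos.mpr hlt
      have hnum : 0 < (1 - α) * bt + α * at' :=
        add_pos_of_pos_of_nonneg (mul_pos hx hbpos) (mul_nonneg h0 hapos.le)
      have hden : 0 < (1 - α) * Bt + α * At :=
        add_pos_of_pos_of_nonneg (mul_pos hx h3) (mul_nonneg h0 h2.le)
      have hdpos : 0 < ((1 - α) • M + α • N).det := by
        rw [hdet α hlt]; positivity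
      rw [hg, if_pos hdpos, trace_inv_eq, hminor α hlt, hdet α hlt]
      field_simp
      ring
  have hc : 0 < at' - bt := sub_pos.mpr h4
  have hrad : 0 ≤ At * (at' * Bt - bt * At) / (at' - bt) :=
    div_nonneg (mul_nonneg h2.le (sub_pos.mpr h5).le) hc.le
  obtain ⟨hmem, hmax⟩ := ratio_max hbpos h1 h2 h3 h4 h6 (Real.sqrt_nonneg _)
    (by rw [Real.sq_sqrt hrad, mul_div_cancel₀ _ hc.ne']) hαt
  have hstrict : ∀ α ∈ Set.Icc (0 : ℝ) 1, α ≠ αt → g α < g αt := by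
    intro α hα hne
    rw [hgval α hα, hgval αt ⟨hmem.1.le, hmem.2.le⟩]
    exact hmax α hα hne
  refine ⟨hmem, fun α hα => ?_, fun α hα h => ?_⟩
  · rcases eq_or_ne α αt with rfl | hne
    · exact le_rfl
    · exact (hstrict α hα hne).le
  · by_contra hne
    exact (hstrict α hα hne).ne h
end
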